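/- arXiv:0712.1047 — 2 statements merged into one kernel-verified Lean document; each statement's English description precedes it below -/
import Mathlib

section
/- If (E, F, ≤_E) is a supersolvable antimatroid, then the natural edge-labelling of the lattice P of feasible sets (labelling a cover X ⋖ Y by the unique element of Y \ X) is an S_n EL-labelling: the labels along any maximal chain of any interval [A, B] form a permutation of B \ A, and each interval has a unique maximal chain whose sequence of labels is increasing with respect to ≤_E. -/
namespace SortingPaper

/-- A maximal chain `c 0 = A ⊂ c 1 ⊂ ⋯ ⊂ c k = B` in the interval `[A, B]` of the
lattice of feasible sets of a set system `F`, ordered by inclusion. -/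
def IsMaxChain {E : Type*} (F : Finset (Finset E)) (A B : Finset E) (k : ℕ)
    (c : ℕ → Finset E) : Prop :=
  c 0 = A ∧ c k = B ∧
  (∀ i ≤ k, c i ∈ F ∧ A ⊆ c i ∧ c i ⊆ B) ∧
  (∀ i < k, c i ⊂ c (i + 1)) ∧
  (∀ i < k, ¬ ∃ D ∈ F, A ⊆ D ∧ D ⊆ B ∧ c i ⊂ D ∧ D ⊂ c (i + 1))

/-- The chain has increasing labels: the unique new element added at each step
increases along the chain. -/
def HasIncreasingLabels {E : Type*} [LinearOrder E] (k : ℕ) (c : ℕ → Finset E) : Prop :=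
  ∀ i, i + 2 ≤ k → ∀ x ∈ c (i + 1) \ c i, ∀ y ∈ c (i + 2) \ c (i + 1), x < y

/-!
Adjoining the least element of `Y \ X` to a feasible `X ⊊ Y` gives a feasible set between `X` and
`Y`, so every cover in the lattice of feasible sets is a cover in the Boolean lattice; hence each
maximal chain of `[A, B]` adds the elements of `B \ A` one at a time. If the labels of such a chain
increase, each label is the least element of `B` not yet included, so the chain must be the greedy
one. The greedy chain stays feasible, and its labels increase by construction.
-/

/-- The closure property of supersolvable antimatroids, restricted to nested pairs `X ⊆ Y` of
feasible sets: adjoining to `X` the least element of `Y \ X` keeps it feasible. -/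
def IsMinAugmentable {E : Type*} [LinearOrder E] (F : Finset (Finset E)) : Prop :=
  ∀ X ∈ F, ∀ Y ∈ F, X ⊆ Y → ∀ x, IsLeast (↑(Y \ X) : Set E) x → insert x X ∈ F

/-- One step of the greedy algorithm from `X` towards `B`: adjoin to `X` the least element of
`B \ X`, or nothing if `B ⊆ X`. -/
def augmentMin {E : Type*} [LinearOrder E] (B X : Finset E) : Finset E :=
  X ∪ {x ∈ B \ X | ∀ y ∈ B \ X, x ≤ y}

/-- The greedy chain from `A` to `B`, which adds the elements of `B \ A` in increasing order;
it is constant once it contains `B`. -/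
def greedyChain {E : Type*} [LinearOrder E] (A B : Finset E) (i : ℕ) : Finset E :=
  (augmentMin B)^[i] A

section CoveringChain

theorem monotoneOn_of_covBy {α : Type*} [Preorder α] {k : ℕ} {c : ℕ → α}
    (hcov : ∀ i < k, c i ⋖ c (i + 1)) : MonotoneOn c (Set.Iic k) :=
  monotoneOn_of_le_add_one Set.ordConnected_Iic fun i _ _ hi ↦ (hcov i hi).le

variable {E : Type*} {k : ℕ} {c : ℕ → Finset E}

theorem card_eq_add_of_covBy (hcov : ∀ i < k, c i ⋖ c (i + 1)) : (c k).card = (c 0).card + k := by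
  induction k with
  | zero => rfl
  | succ k ih =>
    have hlast := Nat.covBy_iff_add_one_eq.mp (hcov k k.lt_succ_self).card_finset
    rw [← hlast, ih fun i hi ↦ hcov i (by lia), add_assoc]

variable [DecidableEq E]

theorem card_sdiff_eq_of_covBy (hcov : ∀ i < k, c i ⋖ c (i + 1)) : (c k \ c 0).card = k := by
  have hsub : c 0 ⊆ c k := monotoneOn_of_covBy hcov k.zero_le Set.self_mem_Iic k.zero_le
  rw [Finset.card_sdiff_of_subset hsub, card_eq_add_of_covBy hcov, Nat.add_sub_cancel_left]

theorem biUnion_range_sdiff_eq (hc : MonotoneOn c (Set.Iic k)) :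
    (Finset.range k).biUnion (fun i ↦ c (i + 1) \ c i) = c k \ c 0 := by
  induction k with
  | zero => simp
  | succ k ih =>
    have hfirst : c 0 ⊆ c k := hc (by simp) (by simp) k.zero_le
    have hlast : c k ⊆ c (k + 1) := hc (by simp) (by simp) k.le_succ
    rw [Finset.range_add_one, Finset.biUnion_insert,
      ih (hc.mono (Set.Iic_subset_Iic.mpr k.le_succ))]
    exact sdiff_sup_sdiff_cancel hlast hfirst

end CoveringChain

section Augmentation

variable {E : Type*} [LinearOrder E] {F : Finset (Finset E)} {A B X : Finset E} {x : E}

theorem mem_augmentMin : x ∈ augmentMin B X ↔ x ∈ X ∨ IsLeast (↑(B \ X) : Set E) x := by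
  simp only [augmentMin, Finset.mem_union, Finset.mem_filter, IsLeast, mem_lowerBounds,
    Finset.mem_coe]

theorem subset_augmentMin : X ⊆ augmentMin B X :=
  Finset.subset_union_left

theorem augmentMin_subset (hXB : X ⊆ B) : augmentMin B X ⊆ B :=
  Finset.union_subset hXB ((Finset.filter_subset _ _).trans Finset.sdiff_subset)

theorem augmentMin_eq_insert (hx : IsLeast (↑(B \ X) : Set E) x) :
    augmentMin B X = insert x X := by
  ext y
  rw [mem_augmentMin, Finset.mem_insert, or_comm]
  exact or_congr_left ⟨fun hy ↦ hy.unique hx, fun h ↦ h ▸ hx⟩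

theorem augmentMin_eq_self (hBX : B ⊆ X) : augmentMin B X = X := by
  simp [augmentMin, Finset.sdiff_eq_empty_iff_subset.mpr hBX]

theorem covBy_augmentMin (hBX : ¬ B ⊆ X) : X ⋖ augmentMin B X := by
  have hmin := (B \ X).isLeast_min' (Finset.sdiff_nonempty.mpr hBX)
  rw [augmentMin_eq_insert hmin]
  exact Finset.covBy_insert (Finset.mem_sdiff.mp hmin.1).2

theorem card_sdiff_augmentMin : (B \ augmentMin B X).card = (B \ X).card - 1 := by
  by_cases hBX : B ⊆ X
  · rw [augmentMin_eq_self hBX, Finset.sdiff_eq_empty_iff_subset.mpr hBX, Finset.card_empty]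
  · have hmin := (B \ X).isLeast_min' (Finset.sdiff_nonempty.mpr hBX)
    rw [augmentMin_eq_insert hmin, Finset.sdiff_insert, Finset.card_erase_of_mem hmin.1]

theorem IsMinAugmentable.augmentMin_mem (hF : IsMinAugmentable F) (hX : X ∈ F) (hB : B ∈ F)
    (hXB : X ⊆ B) : augmentMin B X ∈ F := by
  by_cases hBX : B ⊆ X
  · rwa [augmentMin_eq_self hBX]
  · have hmin := (B \ X).isLeast_min' (Finset.sdiff_nonempty.mpr hBX)
    rw [augmentMin_eq_insert hmin]
    exact hF X hX B hB hXB _ hmin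

theorem greedyChain_succ (A B : Finset E) (i : ℕ) :
    greedyChain A B (i + 1) = augmentMin B (greedyChain A B i) :=
  Function.iterate_succ_apply' _ _ _

theorem greedyChain_subset (hAB : A ⊆ B) (i : ℕ) : greedyChain A B i ⊆ B := by
  induction i with
  | zero => exact hAB
  | succ i ih => exact greedyChain_succ A B i ▸ augmentMin_subset ih

theorem IsMinAugmentable.greedyChain_mem (hF : IsMinAugmentable F) (hA : A ∈ F) (hB : B ∈ F)
    (hAB : A ⊆ B) (i : ℕ) : greedyChain A B i ∈ F := by
  induction i with
  | zero => exact hA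
  | succ i ih => exact greedyChain_succ A B i ▸ hF.augmentMin_mem ih hB (greedyChain_subset hAB i)

theorem card_sdiff_greedyChain (A B : Finset E) (i : ℕ) :
    (B \ greedyChain A B i).card = (B \ A).card - i := by
  induction i with
  | zero => rfl
  | succ i ih => rw [greedyChain_succ, card_sdiff_augmentMin, ih, Nat.sub_sub]

theorem greedyChain_covBy_succ {i : ℕ} (hi : i < (B \ A).card) :
    greedyChain A B i ⋖ greedyChain A B (i + 1) := by
  rw [greedyChain_succ]
  apply covBy_augmentMin
  rw [← Finset.sdiff_eq_empty_iff_subset, ← Finset.card_eq_zero, card_sdiff_greedyChain]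
  lia

theorem greedyChain_card_sdiff (hAB : A ⊆ B) : greedyChain A B (B \ A).card = B := by
  refine (greedyChain_subset hAB _).antisymm ?_
  rw [← Finset.sdiff_eq_empty_iff_subset, ← Finset.card_eq_zero, card_sdiff_greedyChain,
    Nat.sub_self]

end Augmentation

section IncreasingLabels

variable {E : Type*} [LinearOrder E] {k : ℕ} {c : ℕ → Finset E}

theorem HasIncreasingLabels.le_of_mem_sdiff (hinc : HasIncreasingLabels k c)
    (hcov : ∀ i < k, c i ⋖ c (i + 1)) {i : ℕ} (hi : i < k) {x y : E}
    (hx : x ∈ c (i + 1) \ c i) (hy : y ∈ c k \ c i) : x ≤ y := by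
  rw [Finset.mem_sdiff] at hy
  by_cases hyi : y ∈ c (i + 1)
  · have hcard := (Finset.covBy_iff_card_sdiff_eq_one.mp (hcov i hi)).2
    exact (Finset.card_le_one.mp hcard.le x hx y (Finset.mem_sdiff.mpr ⟨hyi, hy.2⟩)).le
  · have hi' : i + 1 < k := lt_of_le_of_ne hi fun h ↦ hyi (h ▸ hy.1)
    obtain ⟨z, hz⟩ := Finset.sdiff_nonempty.mpr (hcov (i + 1) hi').lt.not_ge
    have hxz : x < z := hinc i hi' x hx z hz
    have hzy : z ≤ y :=
      hinc.le_of_mem_sdiff hcov hi' hz (Finset.mem_sdiff.mpr ⟨hy.1, hyi⟩)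
    exact hxz.le.trans hzy
termination_by k - i

theorem HasIncreasingLabels.succ_eq_augmentMin (hinc : HasIncreasingLabels k c)
    (hcov : ∀ i < k, c i ⋖ c (i + 1)) {i : ℕ} (hi : i < k) :
    c (i + 1) = augmentMin (c k) (c i) := by
  obtain ⟨x, hx, hstep⟩ := Finset.covBy_iff_exists_insert.mp (hcov i hi)
  have hxi : x ∈ c (i + 1) := hstep ▸ Finset.mem_insert_self x (c i)
  have hxk : x ∈ c k := monotoneOn_of_covBy hcov hi Set.self_mem_Iic hi hxi
  have hleast : IsLeast (↑(c k \ c i) : Set E) x :=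
    ⟨Finset.mem_sdiff.mpr ⟨hxk, hx⟩,
      fun _ hy ↦ hinc.le_of_mem_sdiff hcov hi (Finset.mem_sdiff.mpr ⟨hxi, hx⟩) hy⟩
  rw [augmentMin_eq_insert hleast, hstep]

theorem HasIncreasingLabels.eq_greedyChain (hinc : HasIncreasingLabels k c)
    (hcov : ∀ i < k, c i ⋖ c (i + 1)) {i : ℕ} (hi : i ≤ k) :
    c i = greedyChain (c 0) (c k) i := by
  induction i with
  | zero => rfl
  | succ i ih => rw [hinc.succ_eq_augmentMin hcov hi, ih (by lia), greedyChain_succ]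

theorem hasIncreasingLabels_greedyChain {A B : Finset E} (hAB : A ⊆ B) (k : ℕ) :
    HasIncreasingLabels k (greedyChain A B) := by
  intro i _ x hx y hy
  rw [Finset.mem_sdiff] at hx hy
  have hx_least : IsLeast (↑(B \ greedyChain A B i) : Set E) x :=
    (mem_augmentMin.mp (greedyChain_succ A B i ▸ hx.1)).resolve_left hx.2
  have hyB : y ∈ B := greedyChain_subset hAB _ hy.1
  have hyi : y ∉ greedyChain A B i := fun h ↦
    hy.2 (greedyChain_succ A B i ▸ subset_augmentMin h)
  have hxy : x ≠ y := fun h ↦ hy.2 (h ▸ hx.1)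
  exact (hx_least.2 (Finset.mem_sdiff.mpr ⟨hyB, hyi⟩)).lt_of_ne hxy

end IncreasingLabels

section MaximalChain

variable {E : Type*} {F : Finset (Finset E)} {A B : Finset E} {k : ℕ} {c : ℕ → Finset E}

theorem isMaxChain_of_covBy (hzero : c 0 = A) (hlast : c k = B) (hmem : ∀ i ≤ k, c i ∈ F)
    (hcov : ∀ i < k, c i ⋖ c (i + 1)) : IsMaxChain F A B k c := by
  have hmono := monotoneOn_of_covBy hcov
  refine ⟨hzero, hlast, fun i hi ↦ ⟨hmem i hi, ?_, ?_⟩, fun i hi ↦ (hcov i hi).lt, ?_⟩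
  · exact hzero ▸ hmono k.zero_le hi i.zero_le
  · exact hlast ▸ hmono hi Set.self_mem_Iic hi
  · rintro i hi ⟨D, -, -, -, hlt, hgt⟩
    exact (hcov i hi).2 hlt hgt

variable [LinearOrder E]

theorem IsMaxChain.covBy (hc : IsMaxChain F A B k c) (hF : IsMinAugmentable F) {i : ℕ}
    (hi : i < k) : c i ⋖ c (i + 1) := by
  obtain ⟨-, -, hmem, hlt, hmax⟩ := hc
  obtain ⟨hciF, hAci, -⟩ := hmem i hi.le
  obtain ⟨hsuccF, -, hsuccB⟩ := hmem (i + 1) hi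
  have hcov : c i ⋖ augmentMin (c (i + 1)) (c i) := covBy_augmentMin (hlt i hi).2
  have hsub : augmentMin (c (i + 1)) (c i) ⊆ c (i + 1) := augmentMin_subset (hlt i hi).1
  have heq : augmentMin (c (i + 1)) (c i) = c (i + 1) := by
    by_contra hne
    exact hmax i hi ⟨_, hF.augmentMin_mem hciF hsuccF (hlt i hi).1,
      hAci.trans subset_augmentMin, hsub.trans hsuccB, hcov.lt, hsub.ssubset_of_ne hne⟩
  rwa [heq] at hcov

theorem IsMinAugmentable.isMaxChain_greedyChain (hF : IsMinAugmentable F) (hA : A ∈ F)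
    (hB : B ∈ F) (hAB : A ⊆ B) : IsMaxChain F A B (B \ A).card (greedyChain A B) :=
  isMaxChain_of_covBy rfl (greedyChain_card_sdiff hAB)
    (fun i _ ↦ hF.greedyChain_mem hA hB hAB i) fun _ hi ↦ greedyChain_covBy_succ hi

end MaximalChain

theorem supersolvable_antimatroid_EL_labelling_general {E : Type*} [LinearOrder E]
    {F : Finset (Finset E)} (hF : IsMinAugmentable F) {A B : Finset E} (hA : A ∈ F) (hB : B ∈ F)
    (hAB : A ⊆ B) :
    (∀ (k : ℕ) (c : ℕ → Finset E), IsMaxChain F A B k c →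
      k = (B \ A).card ∧
      (∀ i < k, ∃ x, x ∉ c i ∧ c (i + 1) = insert x (c i)) ∧
      (Finset.range k).biUnion (fun i ↦ c (i + 1) \ c i) = B \ A) ∧
    (∃ c : ℕ → Finset E, IsMaxChain F A B ((B \ A).card) c ∧
      HasIncreasingLabels ((B \ A).card) c ∧
      ∀ c' : ℕ → Finset E, IsMaxChain F A B ((B \ A).card) c' →
        HasIncreasingLabels ((B \ A).card) c' →
        ∀ i ≤ (B \ A).card, c' i = c i) := by
  refine ⟨fun k c hc ↦ ?_, greedyChain A B, hF.isMaxChain_greedyChain hA hB hAB,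
    hasIncreasingLabels_greedyChain hAB _, fun c hc hinc i hi ↦ ?_⟩
  · have hcov : ∀ i < k, c i ⋖ c (i + 1) := fun i hi ↦ hc.covBy hF hi
    obtain ⟨rfl, rfl, -⟩ := hc
    refine ⟨(card_sdiff_eq_of_covBy hcov).symm, fun i hi ↦ ?_,
      biUnion_range_sdiff_eq (monotoneOn_of_covBy hcov)⟩
    obtain ⟨x, hx, hstep⟩ := Finset.covBy_iff_exists_insert.mp (hcov i hi)
    exact ⟨x, hx, hstep.symm⟩
  · have h := hinc.eq_greedyChain (fun j hj ↦ hc.covBy hF hj) hi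
    rwa [hc.1, hc.2.1] at h

/-- in the lattice of feasible sets of a supersolvable antimatroid, the
natural edge-labelling (labelling a cover `X ⋖ Y` by the unique element of `Y \ X`) is
an `S_n` EL-labelling: along any maximal chain of an interval `[A, B]`, each step adds
exactly one element, the labels form a permutation of `B \ A` (so all maximal chains
have length `|B \ A|`), and there is a unique maximal chain whose labels increase. -/
theorem supersolvable_antimatroid_EL_labelling {E : Type*} [Fintype E] [LinearOrder E]
    (F : Finset (Finset E)) (h0 : ∅ ∈ F)
    (hss : ∀ A ∈ F, ∀ B ∈ F, ∀ (h : ¬ B ⊆ A),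
      insert ((B \ A).min' (Finset.sdiff_nonempty.mpr h)) A ∈ F)
    (A B : Finset E) (hA : A ∈ F) (hB : B ∈ F) (hAB : A ⊆ B) :
    (∀ (k : ℕ) (c : ℕ → Finset E), IsMaxChain F A B k c →
      k = (B \ A).card ∧
      (∀ i < k, ∃ x, x ∉ c i ∧ c (i + 1) = insert x (c i)) ∧
      (Finset.range k).biUnion (fun i => c (i + 1) \ c i) = B \ A) ∧
    (∃ c : ℕ → Finset E, IsMaxChain F A B ((B \ A).card) c ∧
      HasIncreasingLabels ((B \ A).card) c ∧
      ∀ c' : ℕ → Finset E, IsMaxChain F A B ((B \ A).card) c' →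
        HasIncreasingLabels ((B \ A).card) c' →
        ∀ i ≤ (B \ A).card, c' i = c i) := by
  have hF : IsMinAugmentable F := fun X hX Y hY _ _ hx ↦
    (Finset.isLeast_min' _ _).unique hx ▸ hss X hX Y hY (Finset.sdiff_nonempty.mp ⟨_, hx.1⟩)
  exact supersolvable_antimatroid_EL_labelling_general hF hA hB hAB

end SortingPaper
end

section
/- Let (W,S) be an infinite Coxeter system and ω a semi-infinite word in S such that infinitely many group elements occur as subwords of ω. Then the ω-sorting order on W_ω is a lattice: every pair of elements has a join (given by union of index sets of ω-sorted words) and a meet. -/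
namespace SortingPaper

variable {B : Type*} {M : CoxeterMatrix B} {W : Type*} [Group W]

/-- Lexicographic comparison of index sets. -/
def lexLE (A C : Finset ℕ) : Prop :=
  A = C ∨ ∃ k, k ∈ A ∧ k ∉ C ∧ ∀ j < k, (j ∈ A ↔ j ∈ C)

/-- The (finite) subword of a semi-infinite word `ω : ℕ → B` with index set `A`. -/
def subwordInf (ω : ℕ → B) (A : Finset ℕ) : List B :=
  (A.sort (· ≤ ·)).map ω

/-- `A` is the index set of an ω-sorted word for the semi-infinite word `ω`. -/
def IsSortedInf (cs : CoxeterSystem M W) (ω : ℕ → B) (A : Finset ℕ) : Prop :=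
  cs.IsReduced (subwordInf ω A) ∧
  ∀ C : Finset ℕ, cs.IsReduced (subwordInf ω C) →
    cs.wordProd (subwordInf ω C) = cs.wordProd (subwordInf ω A) → lexLE A C

/-!
Whether `A` is ω-sorted is decided by a local greedy condition: no letter `ω k`, chosen or not, is
a left descent of the product over `tail A (k + 1)`, since otherwise the exchange property would
trade a later letter for the one at `k`. As lowering by a simple reflection is monotone for the
Bruhat order, the tails of a greedy set `C` are Bruhat-minimal: if `D` spells the same element as
`tail C (k + 1)` from position `k` on, every later tail of `C` lies below that of `D`.

For the union of greedy sets `A` and `C`, insert the elements of `C` into `A` in increasing order.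
If inserting `x` breaks the greedy condition at some `k < x`, then `ω k` is a left descent of the
new tail but not of the old one, and the product `p` of the letters of `A` strictly between `k` and
`x` satisfies `s p = p r`, with `s` and `r` the letters at `k` and `x`. Hence, by the subword
property, the subword of `C` in `(k, x]` can be respelled with letters in `[k, x)`. The tail of `C`
after `k` is thus spelled without `x`, contradicting its Bruhat-minimality at `x`.
Meets follow, because a family of finite sets closed under unions and containing `∅` has a largest
member inside any given finite set.
-/

section AlternatingWords

open CoxeterSystem (alternatingWord alternatingWord_succ)

theorem prod_map_reverse_alternatingWord {G : Type*} [Monoid G] (f : B → G) (i j : B) (n : ℕ) :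
    ((alternatingWord j i (2 * n)).reverse.map f).prod = (f i * f j) ^ n := by
  induction n with
  | zero => simp [alternatingWord]
  | succ n ih =>
    rw [show 2 * (n + 1) = 2 * n + 1 + 1 by ring, alternatingWord_succ, alternatingWord_succ,
      pow_succ', ← ih]
    simp [mul_assoc]

variable (cs : CoxeterSystem M W)

theorem leftInvSeq_alternatingWord (i j : B) (n : ℕ) :
    cs.leftInvSeq (alternatingWord i j (2 * n)) =
      (List.range (2 * n)).map fun k ↦ cs.wordProd (alternatingWord j i (2 * k + 1)) :=
  List.ext_getElem (by simp) fun k hk _ ↦ by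
    rw [cs.getElem_leftInvSeq_alternatingWord i j n k (by simpa using hk)]
    simp

theorem wordProd_alternatingWord_add_coxeterMatrix (i j : B) (k : ℕ) :
    cs.wordProd (alternatingWord j i (2 * (M i j + k) + 1)) =
      cs.wordProd (alternatingWord j i (2 * k + 1)) := by
  have half_odd (n : ℕ) : (2 * n + 1) / 2 = n := by lia
  simp [cs.prod_alternatingWord_eq_mul_pow, half_odd, pow_add]

theorem even_count_leftInvSeq_alternatingWord [DecidableEq W] (i j : B) (t : W) :
    Even ((cs.leftInvSeq (alternatingWord i j (2 * M i j))).count t) := by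
  rw [leftInvSeq_alternatingWord, two_mul, List.range_add, List.map_append, List.map_map,
    List.count_append]
  simp only [Function.comp_def, wordProd_alternatingWord_add_coxeterMatrix]
  exact Even.add_self _

end AlternatingWords

section InversionParity

variable (cs : CoxeterSystem M W) [DecidableEq W]

/-- The generators of Bourbaki's action of `W` on signed reflections: the simple reflection `s`
conjugates `t` and changes the sign, written additively in `ZMod 2`, exactly when `t = s`. It is
set up on all pairs `(t, ε)`, so that reflections need not form a type of their own. -/
def signedConjSimple (i : B) : Equiv.Perm (W × ZMod 2) :=
  Function.Involutive.toPerm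
    (fun x ↦ (cs.simple i * x.1 * cs.simple i, x.2 + if x.1 = cs.simple i then 1 else 0))
    fun x ↦ by
      have conj_eq_iff : cs.simple i * x.1 * cs.simple i = cs.simple i ↔ x.1 = cs.simple i := by
        rw [mul_eq_right, mul_eq_one_iff_inv_eq, cs.inv_simple, eq_comm]
      ext
      · simp [mul_assoc]
      · simp [conj_eq_iff, add_assoc, CharTwo.add_self_eq_zero]

theorem signedConjSimple_apply (i : B) (t : W) (ε : ZMod 2) :
    signedConjSimple cs i (t, ε) =
      (cs.simple i * t * cs.simple i, ε + if t = cs.simple i then 1 else 0) :=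
  rfl

theorem prod_map_signedConjSimple_apply (l : List B) (t : W) (ε : ZMod 2) :
    (l.map (signedConjSimple cs)).prod (t, ε) =
      (cs.wordProd l * t * (cs.wordProd l)⁻¹, ε + ((cs.rightInvSeq l).count t : ZMod 2)) := by
  induction l with
  | nil => simp
  | cons i l ih =>
    have conj_eq_iff : cs.wordProd l * t * (cs.wordProd l)⁻¹ = cs.simple i ↔
        (cs.wordProd l)⁻¹ * cs.simple i * cs.wordProd l = t := by
      rw [mul_inv_eq_iff_eq_mul, mul_assoc, inv_mul_eq_iff_eq_mul, eq_comm]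
    rw [List.map_cons, List.prod_cons, Equiv.Perm.mul_apply, ih, signedConjSimple_apply]
    ext
    · simp [cs.wordProd_cons, mul_assoc]
    · simp [CoxeterSystem.rightInvSeq, List.count_cons, conj_eq_iff, add_assoc]

theorem isLiftable_signedConjSimple : M.IsLiftable (signedConjSimple cs) := by
  intro i j
  refine Equiv.ext fun ⟨t, ε⟩ ↦ ?_
  have count_eq_zero : (((cs.leftInvSeq
      (CoxeterSystem.alternatingWord j i (2 * M i j))).count t : ℕ) : ZMod 2) = 0 := by
    rw [M.symmetric]
    exact (ZMod.natCast_eq_zero_iff_even).2 (even_count_leftInvSeq_alternatingWord cs j i t)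
  rw [← prod_map_reverse_alternatingWord, prod_map_signedConjSimple_apply, cs.rightInvSeq_reverse,
    List.count_reverse, count_eq_zero, cs.wordProd_reverse, cs.prod_alternatingWord_eq_mul_pow]
  simp

/-- Bourbaki's action of `W` on signed reflections, extending `signedConjSimple`. -/
noncomputable def signedConj : W →* Equiv.Perm (W × ZMod 2) :=
  cs.lift ⟨signedConjSimple cs, isLiftable_signedConjSimple cs⟩

/-- The sign picked up by `t` under the action of `w`. For a reflection `t` it is `1` or `0`
according to whether or not `t` is a right inversion of `w`. -/
noncomputable def inversionParity (w t : W) : ZMod 2 := (signedConj cs w (t, 0)).2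

theorem signedConj_wordProd_apply (l : List B) (t : W) (ε : ZMod 2) :
    signedConj cs (cs.wordProd l) (t, ε) =
      (cs.wordProd l * t * (cs.wordProd l)⁻¹, ε + ((cs.rightInvSeq l).count t : ZMod 2)) := by
  rw [← prod_map_signedConjSimple_apply, CoxeterSystem.wordProd,
    map_list_prod (signedConj cs), List.map_map]
  congr 3
  exact funext (cs.lift_apply_simple _)

theorem inversionParity_wordProd (l : List B) (t : W) :
    inversionParity cs (cs.wordProd l) t = (cs.rightInvSeq l).count t := by
  simp [inversionParity, signedConj_wordProd_apply]

theorem signedConj_apply (w t : W) (ε : ZMod 2) :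
    signedConj cs w (t, ε) = (w * t * w⁻¹, ε + inversionParity cs w t) := by
  obtain ⟨l, rfl⟩ := cs.wordProd_surjective w
  rw [signedConj_wordProd_apply, inversionParity_wordProd]

theorem inversionParity_mul (u v t : W) :
    inversionParity cs (u * v) t =
      inversionParity cs v t + inversionParity cs u (v * t * v⁻¹) := by
  rw [inversionParity, map_mul, Equiv.Perm.mul_apply]
  simp [signedConj_apply]

@[simp]
theorem inversionParity_one (t : W) : inversionParity cs 1 t = 0 := by
  simpa using inversionParity_wordProd cs [] t

theorem inversionParity_simple (i : B) (t : W) :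
    inversionParity cs (cs.simple i) t = if t = cs.simple i then 1 else 0 := by
  simpa [List.count_singleton, eq_comm (a := t)] using inversionParity_wordProd cs [i] t

theorem inversionParity_self {t : W} (ht : cs.IsReflection t) : inversionParity cs t t = 1 := by
  obtain ⟨w, i, rfl⟩ := ht
  have cancel : inversionParity cs w⁻¹ (w * cs.simple i * w⁻¹) +
      inversionParity cs w (cs.simple i) = 0 := by
    simpa [mul_assoc] using (inversionParity_mul cs w w⁻¹ (w * cs.simple i * w⁻¹)).symm
  calc inversionParity cs (w * cs.simple i * w⁻¹) (w * cs.simple i * w⁻¹)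
    _ = inversionParity cs w⁻¹ (w * cs.simple i * w⁻¹) + (inversionParity cs (cs.simple i)
          (cs.simple i) + inversionParity cs w (cs.simple i)) := by
      simp [inversionParity_mul, mul_assoc, add_assoc]
    _ = 1 := by rw [add_left_comm, cancel]; simp [inversionParity_simple]

theorem mem_rightInvSeq_of_inversionParity_ne_zero {l : List B} {t : W}
    (h : inversionParity cs (cs.wordProd l) t ≠ 0) : t ∈ cs.rightInvSeq l := by
  contrapose! h
  simp [inversionParity_wordProd, List.count_eq_zero_of_not_mem h]

theorem isRightInversion_of_inversionParity_ne_zero {w t : W}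
    (h : inversionParity cs w t ≠ 0) : cs.IsRightInversion w t := by
  obtain ⟨l, hl, rfl⟩ := cs.exists_isReduced w
  exact cs.isRightInversion_of_mem_rightInvSeq hl (mem_rightInvSeq_of_inversionParity_ne_zero cs h)

theorem isRightInversion_iff_inversionParity_ne_zero {w t : W} (ht : cs.IsReflection t) :
    cs.IsRightInversion w t ↔ inversionParity cs w t ≠ 0 := by
  refine ⟨fun h hw ↦ ?_, isRightInversion_of_inversionParity_ne_zero cs⟩
  refine ht.not_isRightInversion_mul_left_iff.2 h
    (isRightInversion_of_inversionParity_ne_zero cs ?_)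
  simp [inversionParity_mul, inversionParity_self cs ht, hw]

end InversionParity

section StrongExchange

variable (cs : CoxeterSystem M W)

theorem isRightInversion_simple_mul_iff {w t : W} {i : B} (ht : cs.IsReflection t)
    (hne : w * t ≠ cs.simple i * w) :
    cs.IsRightInversion (cs.simple i * w) t ↔ cs.IsRightInversion w t := by
  classical
  have hconj : w * t * w⁻¹ ≠ cs.simple i := fun h ↦ hne (mul_inv_eq_iff_eq_mul.1 h)
  simp only [isRightInversion_iff_inversionParity_ne_zero cs ht, inversionParity_mul,
    inversionParity_simple, if_neg hconj, add_zero]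

theorem exists_wordProd_mul_eq_wordProd_eraseIdx {l : List B} {t : W}
    (h : cs.IsRightInversion (cs.wordProd l) t) :
    ∃ j < l.length, cs.wordProd l * t = cs.wordProd (l.eraseIdx j) := by
  classical
  obtain ⟨j, hj, rfl⟩ := List.getElem_of_mem (mem_rightInvSeq_of_inversionParity_ne_zero cs
    ((isRightInversion_iff_inversionParity_ne_zero cs h.1).1 h))
  refine ⟨j, by simpa using hj, ?_⟩
  rw [← List.getD_eq_getElem (cs.rightInvSeq l) 1, cs.wordProd_mul_getD_rightInvSeq]

theorem isReflection_inv_mul_simple_mul (w : W) (i : B) :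
    cs.IsReflection (w⁻¹ * cs.simple i * w) :=
  ⟨w⁻¹, i, by rw [inv_inv]⟩

theorem exists_simple_mul_wordProd_eq_wordProd_eraseIdx {l : List B} {i : B}
    (h : cs.IsLeftDescent (cs.wordProd l) i) :
    ∃ j < l.length, cs.simple i * cs.wordProd l = cs.wordProd (l.eraseIdx j) := by
  have hmul : cs.wordProd l * ((cs.wordProd l)⁻¹ * cs.simple i * cs.wordProd l) =
      cs.simple i * cs.wordProd l := by group
  rw [← hmul]
  exact exists_wordProd_mul_eq_wordProd_eraseIdx cs
    ⟨isReflection_inv_mul_simple_mul cs _ i, by rwa [hmul]⟩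

end StrongExchange

section Bruhat

variable (cs : CoxeterSystem M W)

/-- The relation `u = w t` for a right inversion `t` of `w`, whose reflexive transitive closure is
the Bruhat order. The lengths of `u` and `w` may differ by more than one. -/
def BruhatStep (u w : W) : Prop := ∃ t, cs.IsRightInversion w t ∧ u = w * t

/-- The Bruhat order on `W`. -/
def BruhatLE : W → W → Prop := Relation.ReflTransGen (BruhatStep cs)

variable {cs} {u w : W} {i : B}

theorem BruhatStep.bruhatLE (h : BruhatStep cs u w) : BruhatLE cs u w := .single h

theorem BruhatStep.length_lt (h : BruhatStep cs u w) : cs.length u < cs.length w := by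
  obtain ⟨t, ht, rfl⟩ := h
  exact ht.2

theorem BruhatLE.length_le (h : BruhatLE cs u w) : cs.length u ≤ cs.length w := by
  induction h with
  | refl => exact le_rfl
  | tail _ hstep ih => exact ih.trans hstep.length_lt.le

theorem bruhatStep_of_simple_conj (h : cs.length (u * w) < cs.length (u * cs.simple i * w)) :
    BruhatStep cs (u * w) (u * cs.simple i * w) := by
  have hmul : u * cs.simple i * w * (w⁻¹ * cs.simple i * w) = u * w := by
    simp [mul_assoc]
  exact ⟨_, ⟨isReflection_inv_mul_simple_mul cs w i, by rwa [hmul]⟩, hmul.symm⟩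

theorem bruhatStep_simple_mul (h : ¬ cs.IsLeftDescent w i) :
    BruhatStep cs w (cs.simple i * w) := by
  have hlt : cs.length (1 * w) < cs.length (1 * cs.simple i * w) := by
    rw [one_mul, one_mul, cs.not_isLeftDescent_iff.1 h]
    exact Nat.lt_succ_self _
  simpa using bruhatStep_of_simple_conj hlt

theorem BruhatStep.simple_mul (h : BruhatStep cs u w) (i : B) :
    cs.simple i * u = w ∨ BruhatStep cs (cs.simple i * u) (cs.simple i * w) := by
  obtain ⟨t, ht, rfl⟩ := h
  by_cases heq : w * t = cs.simple i * w
  · exact .inl (by rw [heq, cs.simple_mul_simple_cancel_left])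
  · exact .inr ⟨t, (isRightInversion_simple_mul_iff cs ht.1 heq).2 ht, (mul_assoc ..).symm⟩

theorem BruhatLE.simple_mul (h : BruhatLE cs u w) (hw : ¬ cs.IsLeftDescent w i) :
    BruhatLE cs (cs.simple i * u) (cs.simple i * w) := by
  induction h using Relation.ReflTransGen.head_induction_on with
  | refl => exact .refl
  | head hstep hle ih =>
    obtain rfl | hstep' := hstep.simple_mul i
    · exact hle.tail (bruhatStep_simple_mul hw)
    · exact ih.head hstep'

theorem BruhatStep.simple_mul_eq (h : BruhatStep cs u w) (hlen : cs.length w = cs.length u + 1)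
    (hu : ¬ cs.IsLeftDescent u i) (hw : cs.IsLeftDescent w i) : cs.simple i * u = w := by
  refine (h.simple_mul i).resolve_right fun h' ↦ ?_
  have := h'.length_lt
  rw [cs.not_isLeftDescent_iff] at hu
  rw [cs.isLeftDescent_iff] at hw
  lia

theorem isReduced_cons_iff {l : List B} :
    cs.IsReduced (i :: l) ↔ cs.IsReduced l ∧ ¬ cs.IsLeftDescent (cs.wordProd l) i := by
  rw [cs.not_isLeftDescent_iff, ← cs.wordProd_cons]
  refine ⟨fun h ↦ ?_, fun ⟨hl, hi⟩ ↦ by rw [CoxeterSystem.IsReduced, hi, hl.eq, List.length_cons]⟩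
  have hl : cs.IsReduced l := by simpa using h.drop 1
  exact ⟨hl, by rw [h.eq, hl.eq, List.length_cons]⟩

theorem bruhatLE_of_sublist {l m : List B} (h : m.Sublist l) (hl : cs.IsReduced l) :
    BruhatLE cs (cs.wordProd m) (cs.wordProd l) := by
  induction h with
  | slnil => exact .refl
  | cons i _ ih =>
    obtain ⟨hl, hi⟩ := isReduced_cons_iff.1 hl
    rw [cs.wordProd_cons]
    exact (ih hl).tail (bruhatStep_simple_mul hi)
  | cons_cons i _ ih =>
    obtain ⟨hl, hi⟩ := isReduced_cons_iff.1 hl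
    rw [cs.wordProd_cons, cs.wordProd_cons]
    exact (ih hl).simple_mul hi

theorem BruhatLE.exists_sublist {l : List B} (h : BruhatLE cs u (cs.wordProd l)) :
    ∃ m, m.Sublist l ∧ cs.wordProd m = u := by
  induction h using Relation.ReflTransGen.head_induction_on with
  | refl => exact ⟨l, .refl l, rfl⟩
  | head hstep _ ih =>
    obtain ⟨m, hm, rfl⟩ := ih
    obtain ⟨t, ht, rfl⟩ := hstep
    obtain ⟨j, -, hj⟩ := exists_wordProd_mul_eq_wordProd_eraseIdx cs ht
    exact ⟨m.eraseIdx j, (m.eraseIdx_sublist j).trans hm, hj.symm⟩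

theorem exists_sublist_wordProd_eq {l l' m : List B} (hl : cs.IsReduced l)
    (heq : cs.wordProd l = cs.wordProd l') (h : m.Sublist l) :
    ∃ m', m'.Sublist l' ∧ cs.wordProd m' = cs.wordProd m :=
  (heq ▸ bruhatLE_of_sublist h hl).exists_sublist

open Classical in
/-- The shorter of `w` and `s w`, where `s` is the simple reflection indexed by `i`. -/
noncomputable def descend (cs : CoxeterSystem M W) (i : B) (w : W) : W :=
  if cs.IsLeftDescent w i then cs.simple i * w else w

theorem descend_of_not_isLeftDescent (h : ¬ cs.IsLeftDescent w i) : descend cs i w = w := if_neg h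

theorem descend_simple_mul (i : B) (w : W) : descend cs i (cs.simple i * w) = descend cs i w := by
  by_cases h : cs.IsLeftDescent w i
  · simp [descend, cs.isLeftDescent_iff_not_isLeftDescent_mul.1 h, h]
  · simp [descend, cs.isLeftDescent_iff_not_isLeftDescent_mul.not_left.1 h, h]

theorem descend_bruhatLE (i : B) (w : W) : BruhatLE cs (descend cs i w) w := by
  by_cases h : cs.IsLeftDescent w i
  · have := bruhatStep_simple_mul (cs.isLeftDescent_iff_not_isLeftDescent_mul.1 h)
    simpa [descend, h] using this.bruhatLE
  · rw [descend_of_not_isLeftDescent h]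
    exact .refl

theorem descend_bruhatLE_simple_mul (i : B) (w : W) :
    BruhatLE cs (descend cs i w) (cs.simple i * w) :=
  descend_simple_mul (cs := cs) i w ▸ descend_bruhatLE i (cs.simple i * w)

theorem BruhatStep.descend_mono (h : BruhatStep cs u w) (i : B) :
    BruhatLE cs (descend cs i u) (descend cs i w) := by
  obtain rfl | h' := h.simple_mul i
  · rw [descend_simple_mul]
    exact .refl
  by_cases hw : cs.IsLeftDescent w i
  · rw [show descend cs i w = cs.simple i * w from if_pos hw]
    exact (descend_bruhatLE_simple_mul i u).tail h'
  · rw [descend_of_not_isLeftDescent hw]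
    exact (descend_bruhatLE i u).tail h

theorem BruhatLE.descend_mono (h : BruhatLE cs u w) (i : B) :
    BruhatLE cs (descend cs i u) (descend cs i w) := by
  induction h with
  | refl => exact .refl
  | tail _ hstep ih => exact ih.trans (hstep.descend_mono i)

end Bruhat

section Subwords

variable (ω : ℕ → B) {A C D : Finset ℕ} {k n : ℕ}

theorem subwordInf_toFinset {l : List ℕ} (hl : l.SortedLT) :
    subwordInf ω l.toFinset = l.map ω := by
  rw [subwordInf, (List.toFinset_sort (· ≤ ·) hl.nodup).2 hl.sortedLE.pairwise]

@[simp]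
theorem subwordInf_empty : subwordInf ω ∅ = [] := by simp [subwordInf]

@[simp]
theorem subwordInf_singleton (k : ℕ) : subwordInf ω {k} = [ω k] := by simp [subwordInf]

@[simp]
theorem length_subwordInf (A : Finset ℕ) : (subwordInf ω A).length = A.card := by
  simp [subwordInf]

theorem subwordInf_union (h : ∀ a ∈ A, ∀ c ∈ C, a < c) :
    subwordInf ω (A ∪ C) = subwordInf ω A ++ subwordInf ω C := by
  have hsorted : (A.sort ++ C.sort).SortedLT :=
    (List.pairwise_append.2 ⟨A.sortedLT_sort.pairwise, C.sortedLT_sort.pairwise,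
      by simpa using h⟩).sortedLT
  simpa [subwordInf] using subwordInf_toFinset ω hsorted

theorem subwordInf_insert_of_forall_lt (h : ∀ a ∈ A, k < a) :
    subwordInf ω (insert k A) = ω k :: subwordInf ω A := by
  rw [Finset.insert_eq, subwordInf_union ω (by simpa using h)]
  simp

theorem subwordInf_insert_of_forall_gt (h : ∀ a ∈ A, a < k) :
    subwordInf ω (insert k A) = subwordInf ω A ++ [ω k] := by
  rw [Finset.insert_eq, Finset.union_comm, subwordInf_union ω (by simpa using h)]
  simp

theorem subwordInf_sublist_of_subset (h : D ⊆ A) :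
    (subwordInf ω D).Sublist (subwordInf ω A) :=
  (List.sublist_of_subperm_of_sortedLE (D.sortedLT_sort.nodup.subperm fun _ ↦ by simpa using @h _)
    D.sortedLT_sort.sortedLE A.sortedLT_sort.sortedLE).map ω

variable {ω} in
theorem exists_subset_of_sublist {m : List B} (h : m.Sublist (subwordInf ω A)) :
    ∃ D ⊆ A, subwordInf ω D = m := by
  obtain ⟨l, hl, rfl⟩ := List.sublist_map_iff.1 h
  exact ⟨l.toFinset, fun a ha ↦ by simpa using hl.subset (List.mem_toFinset.1 ha),
    subwordInf_toFinset ω (A.sortedLT_sort.pairwise.sublist hl).sortedLT⟩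

/-- The part of the index set `A` from position `k` on. -/
def tail (A : Finset ℕ) (k : ℕ) : Finset ℕ := A.filter (k ≤ ·)

@[simp]
theorem mem_tail {a : ℕ} : a ∈ tail A k ↔ a ∈ A ∧ k ≤ a := Finset.mem_filter

@[simp]
theorem tail_zero (A : Finset ℕ) : tail A 0 = A := by
  ext; simp

theorem tail_of_mem (h : k ∈ A) : tail A k = insert k (tail A (k + 1)) := by
  ext; grind [mem_tail]

theorem tail_of_notMem (h : k ∉ A) : tail A k = tail A (k + 1) := by
  ext; grind [mem_tail]

theorem subwordInf_tail_of_mem (h : k ∈ A) :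
    subwordInf ω (tail A k) = ω k :: subwordInf ω (tail A (k + 1)) := by
  rw [tail_of_mem h, subwordInf_insert_of_forall_lt ω fun a ha ↦ (mem_tail.1 ha).2]

theorem subwordInf_inter_Ico_append (A : Finset ℕ) (h : k ≤ n) :
    subwordInf ω (A ∩ .Ico k n) ++ subwordInf ω (tail A n) = subwordInf ω (tail A k) := by
  rw [← subwordInf_union ω (by grind [mem_tail])]
  congr 1
  ext; grind [mem_tail]

theorem subwordInf_tail_insert (A : Finset ℕ) (h : k ≤ n) :
    subwordInf ω (tail (insert n A) k) =
      subwordInf ω (A ∩ .Ico k n) ++ ω n :: subwordInf ω (tail A (n + 1)) := by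
  have hIco : insert n A ∩ .Ico k n = A ∩ .Ico k n := by
    ext; grind
  have htail : tail (insert n A) (n + 1) = tail A (n + 1) := by
    ext; grind [mem_tail]
  rw [← subwordInf_inter_Ico_append ω _ h, subwordInf_tail_of_mem ω (Finset.mem_insert_self n A),
    hIco, htail]

end Subwords

section SubwordProd

variable (cs : CoxeterSystem M W) (ω : ℕ → B) {A C D : Finset ℕ} {k n : ℕ}

/-- The element of `W` spelled by the subword of `ω` with index set `A`. -/
def subwordProd (A : Finset ℕ) : W := cs.wordProd (subwordInf ω A)

theorem subwordProd_union (h : ∀ a ∈ A, ∀ c ∈ C, a < c) :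
    subwordProd cs ω (A ∪ C) = subwordProd cs ω A * subwordProd cs ω C := by
  rw [subwordProd, subwordInf_union ω h, cs.wordProd_append, subwordProd, subwordProd]

theorem subwordProd_inter_Ico_mul (A : Finset ℕ) (h : k ≤ n) :
    subwordProd cs ω (A ∩ .Ico k n) * subwordProd cs ω (tail A n) =
      subwordProd cs ω (tail A k) := by
  rw [subwordProd, subwordProd, ← cs.wordProd_append, subwordInf_inter_Ico_append ω A h,
    subwordProd]

theorem subwordProd_tail_of_mem (h : k ∈ A) :
    subwordProd cs ω (tail A k) = cs.simple (ω k) * subwordProd cs ω (tail A (k + 1)) := by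
  rw [subwordProd, subwordInf_tail_of_mem ω h, cs.wordProd_cons, subwordProd]

theorem descend_subwordProd_tail (A : Finset ℕ) (k : ℕ) :
    descend cs (ω k) (subwordProd cs ω (tail A k)) =
      descend cs (ω k) (subwordProd cs ω (tail A (k + 1))) := by
  by_cases h : k ∈ A
  · rw [subwordProd_tail_of_mem cs ω h, descend_simple_mul]
  · rw [tail_of_notMem h]

theorem descend_bruhatLE_subwordProd_tail_succ {v : W}
    (h : BruhatLE cs v (subwordProd cs ω (tail A k))) :
    BruhatLE cs (descend cs (ω k) v) (subwordProd cs ω (tail A (k + 1))) :=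
  (descend_subwordProd_tail cs ω A k ▸ h.descend_mono (ω k)).trans (descend_bruhatLE _ _)

variable {cs ω}

theorem isReduced_tail (h : cs.IsReduced (subwordInf ω A)) (k : ℕ) :
    cs.IsReduced (subwordInf ω (tail A k)) := by
  rw [← tail_zero A, ← subwordInf_inter_Ico_append ω A k.zero_le] at h
  simpa using h.drop (subwordInf ω (A ∩ .Ico 0 k)).length

theorem not_isLeftDescent_of_mem (h : cs.IsReduced (subwordInf ω A)) (hk : k ∈ A) :
    ¬ cs.IsLeftDescent (subwordProd cs ω (tail A (k + 1))) (ω k) :=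
  (isReduced_cons_iff.1 (subwordInf_tail_of_mem ω hk ▸ isReduced_tail h k)).2

theorem exists_subset_subwordProd_eq (hA : cs.IsReduced (subwordInf ω A))
    (heq : subwordProd cs ω A = subwordProd cs ω C) (hD : D ⊆ A) :
    ∃ D' ⊆ C, subwordProd cs ω D' = subwordProd cs ω D := by
  obtain ⟨m, hm, hprod⟩ := exists_sublist_wordProd_eq hA heq (subwordInf_sublist_of_subset ω hD)
  obtain ⟨D', hD', rfl⟩ := exists_subset_of_sublist hm
  exact ⟨D', hD', hprod⟩

theorem exists_subset_subwordProd_eq_simple_mul {i : B}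
    (h : cs.IsLeftDescent (subwordProd cs ω A) i) :
    ∃ D ⊆ A, D.card + 1 = A.card ∧ subwordProd cs ω D = cs.simple i * subwordProd cs ω A := by
  obtain ⟨j, hj, hprod⟩ := exists_simple_mul_wordProd_eq_wordProd_eraseIdx cs h
  obtain ⟨D, hD, heq⟩ := exists_subset_of_sublist ((subwordInf ω A).eraseIdx_sublist j)
  refine ⟨D, hD, ?_, by rw [subwordProd, heq, ← hprod, subwordProd]⟩
  rw [← length_subwordInf ω, heq, List.length_eraseIdx_add_one hj, length_subwordInf]

end SubwordProd

section Greedy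

variable {cs : CoxeterSystem M W} {ω : ℕ → B} {A C : Finset ℕ} {k : ℕ}

theorem not_lexLE_iff : ¬ lexLE A C ↔ ∃ k ∈ C, k ∉ A ∧ ∀ j < k, (j ∈ A ↔ j ∈ C) := by
  classical
  constructor
  · intro h
    have hdiff : ∃ k, ¬ (k ∈ A ↔ k ∈ C) := by
      contrapose! h
      exact .inl (Finset.ext h)
    have hagree (j) (hj : j < Nat.find hdiff) := not_not.1 (Nat.find_min hdiff hj)
    have hA : Nat.find hdiff ∉ A := fun hA ↦
      h (.inr ⟨_, hA, fun hC ↦ Nat.find_spec hdiff (iff_of_true hA hC), hagree⟩)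
    exact ⟨_, by_contra fun hC ↦ Nat.find_spec hdiff (iff_of_false hA hC), hA, hagree⟩
  · rintro ⟨k, hkC, hkA, hk⟩ (rfl | ⟨j, hjA, hjC, hj⟩)
    · exact hkA hkC
    · grind

/-- The local form of being ω-sorted, imposed at the positions from `k` on: a letter which is a left
descent of the product of the later chosen letters could have been exchanged for one of them, giving
a lexicographically smaller index set. -/
def IsGreedyFrom (cs : CoxeterSystem M W) (ω : ℕ → B) (k : ℕ) (A : Finset ℕ) : Prop :=
  ∀ j ≥ k, ¬ cs.IsLeftDescent (subwordProd cs ω (tail A (j + 1))) (ω j)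

theorem IsGreedyFrom.mono {n : ℕ} (h : IsGreedyFrom cs ω k A) (hkn : k ≤ n) :
    IsGreedyFrom cs ω n A :=
  fun j hj ↦ h j (hkn.trans hj)

theorem isGreedyFrom_iff_succ : IsGreedyFrom cs ω k A ↔
    ¬ cs.IsLeftDescent (subwordProd cs ω (tail A (k + 1))) (ω k) ∧ IsGreedyFrom cs ω (k + 1) A := by
  refine ⟨fun h ↦ ⟨h k le_rfl, h.mono k.le_succ⟩, fun ⟨hk, h⟩ j hj ↦ ?_⟩
  obtain rfl | hlt := eq_or_lt_of_le hj
  exacts [hk, h j hlt]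

theorem IsGreedyFrom.isReduced_tail (h : IsGreedyFrom cs ω k A) :
    cs.IsReduced (subwordInf ω (tail A k)) := by
  obtain ⟨n, hn⟩ := A.exists_nat_subset_range
  have htail : tail A (max k n) = ∅ := by
    ext; grind [mem_tail]
  refine Nat.decreasingInduction' (fun j _ hkj ih ↦ ?_) (le_max_left k n) ?_
  · by_cases hj : j ∈ A
    · exact subwordInf_tail_of_mem ω hj ▸ isReduced_cons_iff.2 ⟨ih, h j hkj⟩
    · rwa [tail_of_notMem hj]
  · simp [htail, CoxeterSystem.IsReduced]

theorem IsGreedyFrom.isSortedInf (h : IsGreedyFrom cs ω 0 A) : IsSortedInf cs ω A := by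
  refine ⟨by simpa using h.isReduced_tail, fun C hC hprod ↦ by_contra fun hlex ↦ ?_⟩
  obtain ⟨k, hkC, hkA, hagree⟩ := not_lexLE_iff.1 hlex
  have hprefix : C ∩ .Ico 0 k = A ∩ .Ico 0 k := by
    ext; grind
  have htails : subwordProd cs ω (tail C k) = subwordProd cs ω (tail A k) := by
    apply mul_left_cancel (a := subwordProd cs ω (A ∩ .Ico 0 k))
    rw [subwordProd_inter_Ico_mul cs ω A k.zero_le, ← hprefix,
      subwordProd_inter_Ico_mul cs ω C k.zero_le, tail_zero, tail_zero]
    exact hprod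
  apply h k k.zero_le
  rw [← tail_of_notMem hkA, ← htails, subwordProd_tail_of_mem cs ω hkC,
    ← cs.isLeftDescent_iff_not_isLeftDescent_mul.not_left]
  exact not_isLeftDescent_of_mem hC hkC

theorem exists_not_lexLE_of_isLeftDescent (hA : cs.IsReduced (subwordInf ω A))
    (hdesc : cs.IsLeftDescent (subwordProd cs ω (tail A (k + 1))) (ω k)) :
    ∃ C, cs.IsReduced (subwordInf ω C) ∧ subwordProd cs ω C = subwordProd cs ω A ∧
      ¬ lexLE A C := by
  have hk : k ∉ A := fun hk ↦ not_isLeftDescent_of_mem hA hk hdesc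
  obtain ⟨D, hD, hcard, hDprod⟩ := exists_subset_subwordProd_eq_simple_mul hdesc
  have hlt (a) (ha : a ∈ D) : k < a := (mem_tail.1 (hD ha)).2
  have hword : subwordInf ω (A ∩ .Ico 0 k ∪ insert k D) =
      subwordInf ω (A ∩ .Ico 0 k) ++ ω k :: subwordInf ω D := by
    rw [subwordInf_union ω (by grind), subwordInf_insert_of_forall_lt ω hlt]
  have hprod : subwordProd cs ω (A ∩ .Ico 0 k ∪ insert k D) = subwordProd cs ω A := by
    rw [subwordProd, hword, cs.wordProd_append, cs.wordProd_cons, ← subwordProd, ← subwordProd,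
      hDprod, cs.simple_mul_simple_cancel_left, ← tail_of_notMem hk,
      subwordProd_inter_Ico_mul cs ω A k.zero_le, tail_zero]
  have hlen : (subwordInf ω (A ∩ .Ico 0 k ∪ insert k D)).length = (subwordInf ω A).length := by
    rw [hword, List.length_append, List.length_cons, length_subwordInf ω D, hcard,
      ← length_subwordInf ω, ← tail_of_notMem hk, ← List.length_append,
      subwordInf_inter_Ico_append ω A k.zero_le, tail_zero]
  refine ⟨A ∩ .Ico 0 k ∪ insert k D, ?_, hprod, not_lexLE_iff.2 ⟨k, by simp, hk, by grind⟩⟩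
  rw [CoxeterSystem.IsReduced, hlen, ← hA.eq]
  exact congrArg cs.length hprod

theorem isSortedInf_iff_isGreedyFrom_zero : IsSortedInf cs ω A ↔ IsGreedyFrom cs ω 0 A := by
  refine ⟨fun h k _ hdesc ↦ ?_, IsGreedyFrom.isSortedInf⟩
  obtain ⟨C, hC, hprod, hlex⟩ := exists_not_lexLE_of_isLeftDescent h.1 hdesc
  exact hlex (h.2 C hC hprod)

end Greedy

section Union

variable {cs : CoxeterSystem M W} {ω : ℕ → B} {A C D I : Finset ℕ} {k x : ℕ}

theorem IsGreedyFrom.bruhatLE_tail (h : IsGreedyFrom cs ω k C)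
    (hle : BruhatLE cs (subwordProd cs ω (tail C (k + 1))) (subwordProd cs ω (tail D k)))
    (hkx : k < x) : BruhatLE cs (subwordProd cs ω (tail C x)) (subwordProd cs ω (tail D x)) := by
  induction x, hkx using Nat.le_induction with
  | base =>
    simpa [descend_of_not_isLeftDescent (h k le_rfl)] using
      descend_bruhatLE_subwordProd_tail_succ cs ω hle
  | succ n hkn ih =>
    have := descend_bruhatLE_subwordProd_tail_succ cs ω ih
    rwa [descend_subwordProd_tail, descend_of_not_isLeftDescent (h n (k.le_succ.trans hkn))] at this

theorem IsGreedyFrom.subwordProd_insert_ne (h : IsGreedyFrom cs ω k C) (hx : x ∈ C) (hkx : k < x)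
    (hI : I ⊆ .Ico (k + 1) x) (hCI : C ∩ .Ico (k + 1) (x + 1) ⊆ insert x I)
    (hred : cs.IsReduced (subwordInf ω (insert x I))) :
    subwordProd cs ω (insert k I) ≠ subwordProd cs ω (insert x I) := by
  intro heq
  obtain ⟨D, hD, hDprod⟩ := exists_subset_subwordProd_eq hred heq.symm hCI
  have hDmem (a) (ha : a ∈ D) : k ≤ a ∧ a < x := by grind
  -- Followed by the letters of `C` after `x`, `D` spells `tail C (k + 1)` while avoiding `x`,
  -- so that `C` did not need the letter at `x`.
  have hprod : subwordProd cs ω (D ∪ tail C (x + 1)) = subwordProd cs ω (tail C (k + 1)) := by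
    rw [subwordProd_union cs ω (by grind [mem_tail]), hDprod,
      subwordProd_inter_Ico_mul cs ω C (by lia)]
  have htail_k : tail (D ∪ tail C (x + 1)) k = D ∪ tail C (x + 1) := by
    ext; grind [mem_tail]
  have htail_x : tail (D ∪ tail C (x + 1)) x = tail C (x + 1) := by
    ext; grind [mem_tail]
  have hle : BruhatLE cs (subwordProd cs ω (tail C x)) (subwordProd cs ω (tail C (x + 1))) := by
    rw [← htail_x]
    exact h.bruhatLE_tail (by rw [htail_k, hprod]; exact .refl) hkx
  have hlen := hle.length_le
  rw [subwordProd_tail_of_mem cs ω hx, cs.not_isLeftDescent_iff.1 (h x hkx.le)] at hlen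
  lia

theorem simple_mul_subwordProd_inter_Ico_eq {i : B} (hxA : x ∉ A) (hkx : k ≤ x)
    (hA : cs.IsReduced (subwordInf ω (tail A k)))
    (hinsert : cs.IsReduced (subwordInf ω (tail (insert x A) k)))
    (hi : ¬ cs.IsLeftDescent (subwordProd cs ω (tail A k)) i)
    (hi' : cs.IsLeftDescent (subwordProd cs ω (tail (insert x A) k)) i) :
    cs.simple i * subwordProd cs ω (A ∩ .Ico k x) =
      subwordProd cs ω (A ∩ .Ico k x) * cs.simple (ω x) := by
  set u := subwordProd cs ω (A ∩ .Ico k x) with hu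
  set r := subwordProd cs ω (tail A (x + 1)) with hr
  have hword : subwordInf ω (tail A k) =
      subwordInf ω (A ∩ .Ico k x) ++ subwordInf ω (tail A (x + 1)) := by
    rw [← subwordInf_inter_Ico_append ω A hkx, tail_of_notMem hxA]
  have hword' := subwordInf_tail_insert ω A hkx
  have hprod : subwordProd cs ω (tail A k) = u * r := by
    rw [subwordProd, hword, cs.wordProd_append, hu, hr, subwordProd, subwordProd]
  have hprod' : subwordProd cs ω (tail (insert x A) k) = u * cs.simple (ω x) * r := by
    rw [subwordProd, hword', cs.wordProd_append, cs.wordProd_cons, mul_assoc, hu, hr, subwordProd,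
      subwordProd]
  have hlen : cs.length (u * cs.simple (ω x) * r) = cs.length (u * r) + 1 := by
    rw [← hprod, ← hprod', subwordProd, subwordProd, hA.eq, hinsert.eq, hword, hword']
    simp [add_assoc]
  have hstep : BruhatStep cs (u * r) (u * cs.simple (ω x) * r) :=
    bruhatStep_of_simple_conj (hlen ▸ Nat.lt_succ_self _)
  have hswap : cs.simple i * (u * r) = u * cs.simple (ω x) * r :=
    hstep.simple_mul_eq hlen (hprod ▸ hi) (hprod' ▸ hi')
  exact mul_right_cancel ((mul_assoc ..).trans hswap)

theorem IsGreedyFrom.not_isLeftDescent_insert (hA : IsGreedyFrom cs ω k A)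
    (hC : IsGreedyFrom cs ω k C) (hxC : x ∈ C) (hxA : x ∉ A) (hkx : k < x)
    (hCA : ∀ c ∈ C, c < x → c ∈ A)
    (hinsert : cs.IsReduced (subwordInf ω (tail (insert x A) (k + 1)))) :
    ¬ cs.IsLeftDescent (subwordProd cs ω (tail (insert x A) (k + 1))) (ω k) := by
  intro hdesc
  set I := A ∩ .Ico (k + 1) x
  have hword : subwordInf ω (insert x I) = subwordInf ω I ++ [ω x] :=
    subwordInf_insert_of_forall_gt ω (by grind)
  have hred : cs.IsReduced (subwordInf ω (insert x I)) := by
    have hprefix := hinsert.take (subwordInf ω (insert x I)).length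
    rwa [subwordInf_tail_insert ω A hkx, List.append_cons, ← hword, List.take_left] at hprefix
  refine hC.subwordProd_insert_ne hxC hkx Finset.inter_subset_right (by grind) hred ?_
  calc subwordProd cs ω (insert k I)
    _ = cs.simple (ω k) * subwordProd cs ω I := by
      rw [subwordProd, subwordInf_insert_of_forall_lt ω (by grind), cs.wordProd_cons, subwordProd]
    _ = subwordProd cs ω I * cs.simple (ω x) :=
      simple_mul_subwordProd_inter_Ico_eq hxA hkx (hA.mono k.le_succ).isReduced_tail hinsert
        (hA k le_rfl) hdesc
    _ = subwordProd cs ω (insert x I) := by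
      rw [subwordProd, subwordProd, hword, cs.wordProd_append, cs.wordProd_singleton]

protected theorem IsGreedyFrom.insert (hA : IsGreedyFrom cs ω 0 A) (hC : IsGreedyFrom cs ω 0 C)
    (hx : x ∈ C) (hCA : ∀ c ∈ C, c < x → c ∈ A) : IsGreedyFrom cs ω 0 (insert x A) := by
  by_cases hxA : x ∈ A
  · rwa [Finset.insert_eq_of_mem hxA]
  refine Nat.decreasingInduction (motive := fun k _ ↦ IsGreedyFrom cs ω k (insert x A))
    (fun k hkx ih ↦ isGreedyFrom_iff_succ.2 ⟨?_, ih⟩) (fun j hj ↦ ?_) x.zero_le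
  · exact (hA.mono k.zero_le).not_isLeftDescent_insert (hC.mono k.zero_le) hx hxA hkx hCA
      ih.isReduced_tail
  · have htail : tail (insert x A) (j + 1) = tail A (j + 1) := by
      ext; grind [mem_tail]
    exact htail ▸ hA j j.zero_le

protected theorem IsGreedyFrom.union (hA : IsGreedyFrom cs ω 0 A) (hC : IsGreedyFrom cs ω 0 C) :
    IsGreedyFrom cs ω 0 (A ∪ C) := by
  have hinter (n : ℕ) : IsGreedyFrom cs ω 0 (A ∪ C ∩ .range n) := by
    induction n with
    | zero => simpa using hA
    | succ n ih =>
      by_cases hn : n ∈ C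
      · have := ih.insert hC hn (by grind)
        rwa [← Finset.union_insert, ← Finset.inter_insert_of_mem hn, ← Finset.range_add_one] at this
      · rwa [Finset.range_add_one, Finset.inter_insert_of_notMem hn]
  obtain ⟨n, hn⟩ := C.exists_nat_subset_range
  simpa [Finset.inter_eq_left.2 hn] using hinter n

end Union

section Lattice

variable {cs : CoxeterSystem M W} {ω : ℕ → B} {A C : Finset ℕ}

theorem isSortedInf_empty (cs : CoxeterSystem M W) (ω : ℕ → B) : IsSortedInf cs ω ∅ :=
  IsGreedyFrom.isSortedInf fun j _ ↦ by
    simpa [tail, subwordProd] using cs.not_isLeftDescent_one (ω j)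

protected theorem IsSortedInf.union (hA : IsSortedInf cs ω A) (hC : IsSortedInf cs ω C) :
    IsSortedInf cs ω (A ∪ C) := by
  rw [isSortedInf_iff_isGreedyFrom_zero] at *
  exact hA.union hC

theorem exists_greatest_subset_of_union_mem {α : Type*} [DecidableEq α] {p : Finset α → Prop}
    (hempty : p ∅) (hunion : ∀ A C, p A → p C → p (A ∪ C)) (E : Finset α) :
    ∃ D, p D ∧ D ⊆ E ∧ ∀ D', p D' → D' ⊆ E → D' ⊆ D := by
  classical
  refine ⟨(E.powerset.filter p).sup id, ?_, ?_, fun D' hD' hsub ↦ ?_⟩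
  · exact Finset.sup_induction hempty (fun A hA C hC ↦ hunion A C hA hC)
      fun D hD ↦ (Finset.mem_filter.1 hD).2
  · exact Finset.sup_le fun D hD ↦ Finset.mem_powerset.1 (Finset.mem_filter.1 hD).1
  · exact Finset.le_sup (f := id) (Finset.mem_filter.2 ⟨Finset.mem_powerset.2 hsub, hD'⟩)

end Lattice

theorem infinite_sorting_order_lattice_general (cs : CoxeterSystem M W) (ω : ℕ → B) :
    (∀ A C : Finset ℕ, IsSortedInf cs ω A → IsSortedInf cs ω C →
      IsSortedInf cs ω (A ∪ C)) ∧
    (∀ A C : Finset ℕ, IsSortedInf cs ω A → IsSortedInf cs ω C →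
      ∃ D : Finset ℕ, IsSortedInf cs ω D ∧ D ⊆ A ∧ D ⊆ C ∧
        ∀ D' : Finset ℕ, IsSortedInf cs ω D' → D' ⊆ A → D' ⊆ C → D' ⊆ D) := by
  refine ⟨fun _ _ ↦ IsSortedInf.union, fun A C _ _ ↦ ?_⟩
  obtain ⟨D, hD, hsub, hgreatest⟩ := exists_greatest_subset_of_union_mem
    (isSortedInf_empty cs ω) (fun _ _ ↦ IsSortedInf.union) (A ∩ C)
  rw [Finset.subset_inter_iff] at hsub
  exact ⟨D, hD, hsub.1, hsub.2, fun D' hD' hA hC ↦ hgreatest D' hD' (Finset.subset_inter hA hC)⟩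

/-- for an infinite Coxeter system and a semi-infinite sorting word `ω`
with infinitely many group elements occurring as subwords, the ω-sorting order is a
lattice: joins are given by unions of ω-sorted index sets, and meets exist. -/
theorem infinite_sorting_order_lattice (cs : CoxeterSystem M W) [Infinite W]
    (ω : ℕ → B)
    (hinf : {u : W | ∃ A : Finset ℕ, cs.wordProd (subwordInf ω A) = u}.Infinite) :
    (∀ A C : Finset ℕ, IsSortedInf cs ω A → IsSortedInf cs ω C →
      IsSortedInf cs ω (A ∪ C)) ∧
    (∀ A C : Finset ℕ, IsSortedInf cs ω A → IsSortedInf cs ω C →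
      ∃ D : Finset ℕ, IsSortedInf cs ω D ∧ D ⊆ A ∧ D ⊆ C ∧
        ∀ D' : Finset ℕ, IsSortedInf cs ω D' → D' ⊆ A → D' ⊆ C → D' ⊆ D) :=
  infinite_sorting_order_lattice_general cs ω

end SortingPaper
end
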